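/- For every subset N of ℕ^m satisfying N + ℕ^m = N there exists a unique smallest finite subset V of N such that V + ℕ^m = N; that is, V is finite, V + ℕ^m = N, and V is contained in every subset W of N with W + ℕ^m = N. -/

import Mathlib

open Pointwise

/-!
In the componentwise order, `V + ℕ^m` is the upper closure of `V`. As this order is well-founded,
`N` is the upper closure of its minimal elements, and any `V` with upper closure `N` must contain
each of them. The minimal elements form an antichain, which is finite by Dickson's lemma.
-/

theorem add_univ_eq_upperClosure {α : Type*} [Add α] [Preorder α] [CanonicallyOrderedAdd α]
    (s : Set α) : s + (Set.univ : Set α) = (upperClosure s : Set α) := by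
  ext x
  simp only [Set.mem_add, Set.mem_univ, true_and, SetLike.mem_coe, mem_upperClosure,
    le_iff_exists_add, eq_comm]

theorem upperClosure_setOfPred_minimal {α : Type*} [Preorder α] [WellFoundedLT α] (s : Set α) :
    upperClosure {x | Minimal (· ∈ s) x} = upperClosure s := by
  refine le_antisymm (le_upperClosure.2 fun x hx ↦ ?_) (upperClosure_anti fun _ hx ↦ hx.prop)
  obtain ⟨y, hyx, hy⟩ := exists_minimal_le_of_wellFoundedLT (· ∈ s) x hx
  exact ⟨y, hy, hyx⟩

section PartialOrder

variable {α : Type*} [PartialOrder α]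

theorem mem_of_minimal_mem_upperClosure {s : Set α} {x : α}
    (hx : Minimal (· ∈ upperClosure s) x) : x ∈ s := by
  obtain ⟨y, hy, hyx⟩ := hx.prop
  rwa [hx.eq_of_ge (subset_upperClosure hy) hyx]

theorem isLeast_setOfPred_minimal_of_isUpperSet [WellFoundedLT α] {s : Set α}
    (hs : IsUpperSet s) :
    IsLeast {t : Set α | (upperClosure t : Set α) = s} {x | Minimal (· ∈ s) x} := by
  refine ⟨?_, ?_⟩
  · change (upperClosure {x | Minimal (· ∈ s) x} : Set α) = s
    rw [upperClosure_setOfPred_minimal, hs.upperClosure]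
  · rintro t rfl x hx
    exact mem_of_minimal_mem_upperClosure hx

end PartialOrder

theorem stmt1_general {α : Type*} [Add α] [PartialOrder α] [CanonicallyOrderedAdd α]
    [WellQuasiOrderedLE α] (N : Set α) (hN : N + (Set.univ : Set α) = N) :
    ∃! V : Set α, V.Finite ∧ V ⊆ N ∧ V + (Set.univ : Set α) = N ∧
      ∀ W : Set α, W ⊆ N → W + (Set.univ : Set α) = N → V ⊆ W := by
  simp only [add_univ_eq_upperClosure] at hN ⊢
  have minimal_subset : {x | Minimal (· ∈ N) x} ⊆ N := fun _ hx ↦ hx.prop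
  have minimal_finite : {x | Minimal (· ∈ N) x}.Finite :=
    WellQuasiOrderedLE.finite_of_isAntichain (setOfPred_minimal_antichain _)
  obtain ⟨minimal_generates, minimal_least⟩ :=
    isLeast_setOfPred_minimal_of_isUpperSet (upperClosure_eq.1 hN)
  refine ⟨{x | Minimal (· ∈ N) x},
    ⟨minimal_finite, minimal_subset, minimal_generates, fun _ _ hW ↦ minimal_least hW⟩, ?_⟩
  rintro V ⟨-, -, V_generates, V_least⟩
  exact (V_least _ minimal_subset minimal_generates).antisymm (minimal_least V_generates)

/-- For every subset `N` of `ℕ^m` with `N + ℕ^m = N` there is a unique smallest finite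
subset `V` of `N` with `V + ℕ^m = N`; i.e. `V` is finite, generates `N`, and is contained
in every subset `W` of `N` with `W + ℕ^m = N`. -/
theorem stmt1 {m : ℕ} (N : Set (Fin m → ℕ)) (hN : N + (Set.univ : Set (Fin m → ℕ)) = N) :
    ∃! V : Set (Fin m → ℕ),
      V.Finite ∧ V ⊆ N ∧ V + (Set.univ : Set (Fin m → ℕ)) = N ∧
        ∀ W : Set (Fin m → ℕ), W ⊆ N → W + (Set.univ : Set (Fin m → ℕ)) = N → V ⊆ W :=
  stmt1_general N hN
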